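/- Let n, R, K be positive integers and let ζ > 0. Let C ∈ ℝ^{n×R} have more than K distinct row values, with any two distinct row values of C at Euclidean distance at least ζ, and let D ∈ ℝ^{n×R} have at most K distinct row values. Then some distinct row value of C is at Euclidean distance greater than ζ/3 from every row of D. Consequently, if in addition each distinct row value of C occurs as a row of C for more than m indices, for some positive integer m, then ‖C − D‖_F > √m·(ζ/3). -/

import Mathlib

open Matrix

/-- The Euclidean distance between two vectors in `ℝ^R` (e.g. two rows of a matrix). -/
noncomputable def rowDist {R : ℕ} (a b : Fin R → ℝ) : ℝ :=
  Real.sqrt (∑ k, (a k - b k) ^ 2)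

/-- The Frobenius norm of a real matrix. -/
noncomputable def frobNorm {m n : ℕ} (A : Matrix (Fin m) (Fin n) ℝ) : ℝ :=
  Real.sqrt (∑ i, ∑ j, (A i j) ^ 2)

/-!
If every value of `c` were within `r` of a value of `d`, the closed `r`-balls around the values of
`d` would cover those of `c`. Each such ball contains at most one point of a set whose points are
more than `2r` apart, so `c` could not have more values than `d`. All rows of `c` equal to a value
that is farther than `r` from every row of `d` then contribute more than `r ^ 2` each to the squared
Frobenius distance.
-/

open Metric Set
open scoped NNReal

theorem not_isCover_of_encard_lt_of_isSeparated {X : Type*} [PseudoEMetricSpace X] {s t : Set X}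
    {r : ℝ≥0} (hcard : t.encard < s.encard) (hs : IsSeparated (2 * r : ℝ≥0) s) :
    ¬ IsCover r s t := by
  intro hcover
  refine hcard.not_ge ?_
  calc s.encard
      ≤ packingNumber (2 * r) s := hs.encard_le_packingNumber subset_rfl
    _ ≤ externalCoveringNumber r s := packingNumber_two_mul_le_externalCoveringNumber r s
    _ ≤ t.encard := hcover.externalCoveringNumber_le_encard

theorem exists_forall_lt_dist_of_encard_range_lt {ι κ X : Type*} [PseudoMetricSpace X]
    {c : ι → X} {d : κ → X} {r : ℝ} (hr : 0 ≤ r) (hcard : (range d).encard < (range c).encard)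
    (hsep : ∀ i j, c i ≠ c j → 2 * r < dist (c i) (c j)) :
    ∃ i, ∀ j, r < dist (c i) (d j) := by
  lift r to ℝ≥0 using hr
  have hc : IsSeparated (2 * r : ℝ≥0) (range c) := by
    rintro _ ⟨i, rfl⟩ _ ⟨j, rfl⟩ hij
    rw [edist_nndist, ENNReal.coe_lt_coe]
    exact_mod_cast hsep i j hij
  by_contra! hnear
  refine not_isCover_of_encard_lt_of_isSeparated hcard hc ?_
  rw [isCover_iff_subset_iUnion_closedBall]
  rintro _ ⟨i, rfl⟩
  obtain ⟨j, hj⟩ := hnear i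
  exact mem_biUnion (mem_range_self j) hj

theorem sqrt_ncard_mul_lt_sqrt_sum_sq {ι : Type*} [Fintype ι] {s : Set ι} {f : ι → ℝ} {r : ℝ}
    (hr : 0 ≤ r) (hs : s.Nonempty) (hf : ∀ i ∈ s, r < f i) :
    √s.ncard * r < √(∑ i, f i ^ 2) := by
  classical
  apply Real.lt_sqrt_of_sq_lt
  rw [mul_pow, Real.sq_sqrt (Nat.cast_nonneg _), ncard_eq_toFinset_card']
  calc (s.toFinset.card : ℝ) * r ^ 2
      = ∑ _i ∈ s.toFinset, r ^ 2 := by rw [Finset.sum_const, nsmul_eq_mul]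
    _ < ∑ i ∈ s.toFinset, f i ^ 2 :=
        Finset.sum_lt_sum_of_nonempty (toFinset_nonempty.2 hs) fun i hi =>
          pow_lt_pow_left₀ (hf i (mem_toFinset.1 hi)) hr two_ne_zero
    _ ≤ ∑ i, f i ^ 2 := Finset.sum_le_univ_sum_of_nonneg fun i => sq_nonneg (f i)

theorem rowDist_eq_dist_toLp {R : ℕ} (a b : Fin R → ℝ) :
    rowDist a b = dist (WithLp.toLp 2 a) (WithLp.toLp 2 b) := by
  simp only [rowDist, EuclideanSpace.dist_eq, Real.dist_eq, sq_abs]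

theorem frobNorm_sub_eq_sqrt_sum_dist_toLp_sq {n R : ℕ} (C D : Matrix (Fin n) (Fin R) ℝ) :
    frobNorm (C - D) = √(∑ i, dist (WithLp.toLp 2 (C i)) (WithLp.toLp 2 (D i)) ^ 2) := by
  simp only [frobNorm, EuclideanSpace.dist_sq_eq, Real.dist_eq, sq_abs, Matrix.sub_apply]

theorem ncard_range_toLp {ι V : Type*} (p : ENNReal) (f : ι → V) :
    (range fun i => WithLp.toLp p (f i)).ncard = (range f).ncard := by
  rw [range_comp' (WithLp.toLp p) f, ncard_image_of_injective _ (WithLp.toLp_injective p)]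

theorem stmt15_general {ι X : Type*} [Fintype ι] [PseudoMetricSpace X] {c d : ι → X} {r : ℝ}
    (hr : 0 ≤ r) (hcard : (range d).ncard < (range c).ncard)
    (hsep : ∀ i j, c i ≠ c j → 2 * r < dist (c i) (c j)) :
    (∃ i, ∀ j, r < dist (c i) (d j)) ∧
      ∀ m : ℕ, (∀ i, m ≤ {j | c j = c i}.ncard) → √m * r < √(∑ i, dist (c i) (d i) ^ 2) := by
  have hencard : (range d).encard < (range c).encard := by
    rwa [← (finite_range d).cast_ncard_eq, ← (finite_range c).cast_ncard_eq, Nat.cast_lt]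
  obtain ⟨i, hi⟩ := exists_forall_lt_dist_of_encard_range_lt hr hencard hsep
  refine ⟨⟨i, hi⟩, fun m hm => ?_⟩
  have hfar : ∀ j ∈ {j | c j = c i}, r < dist (c j) (d j) := by
    rintro j (hj : c j = c i)
    exact hj ▸ hi j
  calc √m * r ≤ √{j | c j = c i}.ncard * r := by gcongr; exact hm i
    _ < √(∑ i, dist (c i) (d i) ^ 2) := sqrt_ncard_mul_lt_sqrt_sum_sq hr ⟨i, rfl⟩ hfar

/-- if `C` has more than `K` distinct row values, pairwise `ζ`-separated, and `D`
has at most `K` distinct row values, then some row value of `C` is farther than `ζ/3` from every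
row of `D`; consequently, if moreover each row value of `C` occurs more than `m` times, then
`‖C - D‖_F > √m (ζ/3)`. -/
theorem stmt15 {n R K : ℕ} (ζ : ℝ) (hζ : 0 < ζ)
    (C D : Matrix (Fin n) (Fin R) ℝ)
    (hCK : K < (Set.range fun i => C i).ncard)
    (hsep : ∀ i j, C i ≠ C j → ζ ≤ rowDist (C i) (C j))
    (hDK : (Set.range fun i => D i).ncard ≤ K) :
    (∃ i, ∀ j, ζ / 3 < rowDist (C i) (D j)) ∧
      ∀ m : ℕ, 0 < m → (∀ i, m < {j | C j = C i}.ncard) →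
        Real.sqrt m * (ζ / 3) < frobNorm (C - D) := by
  simp only [rowDist_eq_dist_toLp, frobNorm_sub_eq_sqrt_sum_dist_toLp_sq] at hsep ⊢
  obtain ⟨hfar, hfrob⟩ := stmt15_general (r := ζ / 3)
    (c := fun i => WithLp.toLp 2 (C i)) (d := fun i => WithLp.toLp 2 (D i)) (by positivity)
    (by simpa only [ncard_range_toLp 2 C, ncard_range_toLp 2 D] using hDK.trans_lt hCK)
    fun i j hij => by linarith [hsep i j (ne_of_apply_ne _ hij)]
  exact ⟨hfar, fun m _ hm => hfrob m fun i => by simpa only [WithLp.toLp.injEq] using (hm i).le⟩
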